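/- Consider the group G₀ = (ℂ^6, ⊕) with (x₁,x₂,x₃,x₄,x₅,s) ⊕ (y₁,y₂,y₃,y₄,y₅,t) = (x₁+e^s y₁, x₂+e^{2s}y₂, x₃+e^{3s}y₃, x₄+e^{3s}y₄+e^{2s}x₁y₂−e^s x₂y₁, x₅+e^{4s}y₅, s+t). For g = (g₁,…,g₆) ∈ ℂ^6, the conjugation map C_g : ℂ^6 → ℂ^6, C_g(x) = g ⊕ x ⊕ g⁻¹, is holomorphic, and its derivative at 0 (the adjoint representation Ad(g)) is the ℂ-linear map sending e₁ ↦ e^{g₆}e₁ − 2g₂e^{g₆}e₄, e₂ ↦ e^{2g₆}e₂ + 2g₁e^{2g₆}e₄, e₃ ↦ e^{3g₆}e₃, e₄ ↦ e^{3g₆}e₄, e₅ ↦ e^{4g₆}e₅, and e₆ ↦ −g₁e₁ − 2g₂e₂ − 3g₃e₃ − (g₁g₂ + 3g₄)e₄ − 4g₅e₅ + e₆, where e₁,…,e₆ is the standard basis of ℂ^6. -/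

import Mathlib

/-- The group operation `⊕` on `ℂ^6`. -/
noncomputable def cSixMul (x y : Fin 6 → ℂ) : Fin 6 → ℂ :=
  ![x 0 + Complex.exp (x 5) * y 0,
    x 1 + Complex.exp (2 * x 5) * y 1,
    x 2 + Complex.exp (3 * x 5) * y 2,
    x 3 + Complex.exp (3 * x 5) * y 3
      + Complex.exp (2 * x 5) * x 0 * y 1 - Complex.exp (x 5) * x 1 * y 0,
    x 4 + Complex.exp (4 * x 5) * y 4,
    x 5 + y 5]

/-- The inverse `(−e^{−t}x₁, −e^{−2t}x₂, −e^{−3t}x₃, −e^{−3t}x₄, −e^{−4t}x₅, −t)`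
in `(ℂ^6, ⊕)`. -/
noncomputable def cSixInv (x : Fin 6 → ℂ) : Fin 6 → ℂ :=
  ![-(Complex.exp (-(x 5)) * x 0),
    -(Complex.exp (-(2 * x 5)) * x 1),
    -(Complex.exp (-(3 * x 5)) * x 2),
    -(Complex.exp (-(3 * x 5)) * x 3),
    -(Complex.exp (-(4 * x 5)) * x 4),
    -(x 5)]

/-- The conjugation map `C_g(x) = g ⊕ x ⊕ g⁻¹`. -/
noncomputable def conjMap (g : Fin 6 → ℂ) (x : Fin 6 → ℂ) : Fin 6 → ℂ :=
  cSixMul (cSixMul g x) (cSixInv g)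

/-- The standard basis vectors `e₁,…,e₆` of `ℂ^6` (indexed from `0`). -/
noncomputable def ee (i : Fin 6) : Fin 6 → ℂ := Pi.single i 1

/-!
Conjugation by `g` cancels the factors `e^{k(g₆ + x₆)} e^{-k g₆} = e^{k x₆}`, so every coordinate of
`C_g` is a sum of affine functions of `x` and of products `e^{k x₆} (a + m x)` with `m` linear. The
derivative of such a product at `0` is `k a x₆ + m x`, and collecting these terms row by row gives
`Ad(g)`.
-/

open Complex ContinuousLinearMap

section ExpMulAffine

variable {E : Type*} [NormedAddCommGroup E] [NormedSpace ℂ E]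

theorem hasFDerivAt_cexp_mul_affine_zero (k a : ℂ) (ℓ m : E →L[ℂ] ℂ) :
    HasFDerivAt (fun x ↦ exp (k * ℓ x) * (a + m x)) ((k * a) • ℓ + m) 0 := by
  have hexp : HasFDerivAt (fun x ↦ exp (k * ℓ x)) (k • ℓ) 0 := by
    simpa using (ℓ.hasFDerivAt (x := 0)).const_mul k |>.cexp
  refine (hexp.fun_mul (m.hasFDerivAt.const_add a)).congr_fderiv ?_
  simp only [map_zero, mul_zero, exp_zero, add_zero]
  module

theorem hasFDerivAt_affine_sub_cexp_mul_zero (k a : ℂ) (ℓ m : E →L[ℂ] ℂ) :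
    HasFDerivAt (fun x ↦ a + m x - exp (k * ℓ x) * a) (m - (k * a) • ℓ) 0 := by
  simpa using (m.hasFDerivAt.const_add a).fun_sub (hasFDerivAt_cexp_mul_affine_zero k a ℓ 0)

end ExpMulAffine

theorem cexp_mul_add_mul_cexp_neg (k s t : ℂ) :
    exp (k * (s + t)) * exp (-(k * s)) = exp (k * t) := by
  rw [← exp_add]
  ring_nf

theorem conjMap_eq (g x : Fin 6 → ℂ) :
    conjMap g x =
      ![g 0 + exp (g 5) * x 0 - exp (x 5) * g 0,
        g 1 + exp (2 * g 5) * x 1 - exp (2 * x 5) * g 1,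
        g 2 + exp (3 * g 5) * x 2 - exp (3 * x 5) * g 2,
        g 3 + (exp (3 * g 5) * x 3 + exp (2 * g 5) * g 0 * x 1 - exp (g 5) * g 1 * x 0)
          - exp (3 * x 5) * g 3
          - exp (2 * x 5) * (g 0 * g 1 + g 1 * exp (g 5) * x 0)
          + exp (x 5) * (g 0 * g 1 + g 0 * exp (2 * g 5) * x 1),
        g 4 + exp (4 * g 5) * x 4 - exp (4 * x 5) * g 4,
        x 5] := by
  have cancel (k : ℂ) := cexp_mul_add_mul_cexp_neg k (g 5) (x 5)
  have cancel_one : exp (g 5 + x 5) * exp (-g 5) = exp (x 5) := by simpa using cancel 1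
  ext i
  fin_cases i <;> dsimp [conjMap, cSixMul, cSixInv]
  · linear_combination -g 0 * cancel_one
  · linear_combination -g 1 * cancel 2
  · linear_combination -g 2 * cancel 3
  · linear_combination -g 3 * cancel 3 - (g 0 + exp (g 5) * x 0) * g 1 * cancel 2
      + (g 1 + exp (2 * g 5) * x 1) * g 0 * cancel_one
  · linear_combination -g 4 * cancel 4
  · ring

theorem differentiable_conjMap (g : Fin 6 → ℂ) : Differentiable ℂ (conjMap g) := by
  rw [funext (conjMap_eq g), differentiable_pi]
  intro i
  fin_cases i <;> dsimp <;> fun_prop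

/-- The `i`-th coordinate as a continuous linear form on `ℂ^6`, indexed from `0` like `ee`. -/
noncomputable abbrev coord (i : Fin 6) : (Fin 6 → ℂ) →L[ℂ] ℂ := proj i

/-- The adjoint representation `Ad(g)` of `(ℂ^6, ⊕)`, given by the rows of its matrix in the
standard basis: the `i`-th entry is the linear form `v ↦ (Ad(g) v) i`. -/
noncomputable def adjointMap (g : Fin 6 → ℂ) : (Fin 6 → ℂ) →L[ℂ] (Fin 6 → ℂ) :=
  .pi
    ![exp (g 5) • coord 0 - g 0 • coord 5,
      exp (2 * g 5) • coord 1 - (2 * g 1) • coord 5,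
      exp (3 * g 5) • coord 2 - (3 * g 2) • coord 5,
      exp (3 * g 5) • coord 3 + (2 * g 0 * exp (2 * g 5)) • coord 1
        - (2 * g 1 * exp (g 5)) • coord 0 - (g 0 * g 1 + 3 * g 3) • coord 5,
      exp (4 * g 5) • coord 4 - (4 * g 4) • coord 5,
      coord 5]

theorem hasFDerivAt_conjMap_apply_three_zero (g : Fin 6 → ℂ) :
    HasFDerivAt (fun x ↦ conjMap g x 3)
      (exp (3 * g 5) • coord 3 + (2 * g 0 * exp (2 * g 5)) • coord 1
        - (2 * g 1 * exp (g 5)) • coord 0 - (g 0 * g 1 + 3 * g 3) • coord 5) 0 := by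
  have weight_three := hasFDerivAt_affine_sub_cexp_mul_zero 3 (g 3) (coord 5)
    (exp (3 * g 5) • coord 3 + (exp (2 * g 5) * g 0) • coord 1 - (exp (g 5) * g 1) • coord 0)
  have weight_two := hasFDerivAt_cexp_mul_affine_zero 2 (g 0 * g 1) (coord 5)
    ((g 1 * exp (g 5)) • coord 0)
  have weight_one := hasFDerivAt_cexp_mul_affine_zero 1 (g 0 * g 1) (coord 5)
    ((g 0 * exp (2 * g 5)) • coord 1)
  simp only [one_mul] at weight_one
  simp only [conjMap_eq]
  refine ((weight_three.sub weight_two).add weight_one).congr_fderiv ?_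
  module

theorem hasFDerivAt_conjMap_zero (g : Fin 6 → ℂ) :
    HasFDerivAt (conjMap g) (adjointMap g) 0 := by
  have affine_sub_exp (k c a : ℂ) (i : Fin 6) :
      HasFDerivAt (fun x : Fin 6 → ℂ ↦ a + c * x i - exp (k * x 5) * a)
        (c • coord i - (k * a) • coord 5) 0 :=
    hasFDerivAt_affine_sub_cexp_mul_zero k a (coord 5) (c • coord i)
  have fourth_coord := hasFDerivAt_conjMap_apply_three_zero g
  simp only [conjMap_eq] at fourth_coord
  rw [funext (conjMap_eq g), adjointMap, hasFDerivAt_pi]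
  intro i
  fin_cases i
  · simpa using affine_sub_exp 1 (exp (g 5)) (g 0) 0
  · exact affine_sub_exp 2 (exp (2 * g 5)) (g 1) 1
  · exact affine_sub_exp 3 (exp (3 * g 5)) (g 2) 2
  · exact fourth_coord
  · exact affine_sub_exp 4 (exp (4 * g 5)) (g 4) 4
  · exact hasFDerivAt_apply 5 0

/-- The conjugation map `C_g` of `G₀ = (ℂ^6, ⊕)` is holomorphic, and its
derivative at `0` (the adjoint representation `Ad(g)`) acts on the standard
basis by the explicit formulas of the worked example. -/
theorem statement17 (g : Fin 6 → ℂ) :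
    DifferentiableAt ℂ (conjMap g) 0 ∧
    fderiv ℂ (conjMap g) 0 (ee 0)
      = Complex.exp (g 5) • ee 0 - (2 * g 1 * Complex.exp (g 5)) • ee 3 ∧
    fderiv ℂ (conjMap g) 0 (ee 1)
      = Complex.exp (2 * g 5) • ee 1 + (2 * g 0 * Complex.exp (2 * g 5)) • ee 3 ∧
    fderiv ℂ (conjMap g) 0 (ee 2) = Complex.exp (3 * g 5) • ee 2 ∧
    fderiv ℂ (conjMap g) 0 (ee 3) = Complex.exp (3 * g 5) • ee 3 ∧
    fderiv ℂ (conjMap g) 0 (ee 4) = Complex.exp (4 * g 5) • ee 4 ∧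
    fderiv ℂ (conjMap g) 0 (ee 5)
      = -(g 0) • ee 0 - (2 * g 1) • ee 1 - (3 * g 2) • ee 2
          - (g 0 * g 1 + 3 * g 3) • ee 3 - (4 * g 4) • ee 4 + ee 5 := by
  refine ⟨(differentiable_conjMap g).differentiableAt, ?_, ?_, ?_, ?_, ?_, ?_⟩ <;>
    rw [(hasFDerivAt_conjMap_zero g).fderiv] <;>
    ext i <;> fin_cases i <;> simp [adjointMap, ee]
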